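/- Let p ≡ 3 (mod 4) be a prime and r ≥ 1 an integer. Then the sum over k from 0 to p^{2r}-1 of ((1/2)_k)^3/(k!)^3 is congruent to p^{2r} · (3/4)_{(p^{2r}-1)/2}/(5/4)_{(p^{2r}-1)/2} modulo p^{2r+2}. -/

import Mathlib

open Finset

/-- The rising factorial (Pochhammer symbol) `(a)_k = a(a+1)⋯(a+k-1)` for `a : ℚ`. -/
def risingFactorial (a : ℚ) (k : ℕ) : ℚ := ∏ i ∈ Finset.range k, (a + i)

/-- `x` has p-adic valuation at least `n`. -/
def DD (p n : ℕ) (x : ℚ) : Prop :=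
  ∃ a b : ℤ, ¬ ((p : ℤ) ∣ b) ∧ x * (b : ℚ) = (p : ℚ) ^ n * (a : ℚ)

/-- `x` is congruent to one modulo `p ^ n`. -/
def UU (p n : ℕ) (x : ℚ) : Prop := DD p n (x - 1)

section basic

variable {p : ℕ}

lemma nd_mul (hp : p.Prime) {a b : ℤ} (ha : ¬ ((p : ℤ) ∣ a)) (hb : ¬ ((p : ℤ) ∣ b)) :
    ¬ ((p : ℤ) ∣ a * b) := by
  intro h
  rcases (Nat.prime_iff_prime_int.mp hp).dvd_or_dvd h with h | h
  · exact ha h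
  · exact hb h

lemma nd_one (hp : p.Prime) : ¬ ((p : ℤ) ∣ 1) := by
  intro h
  have := (Nat.prime_iff_prime_int.mp hp).not_dvd_one
  exact this h

lemma DD_int (hp : p.Prime) (z : ℤ) : DD p 0 (z : ℚ) :=
  ⟨z, 1, nd_one hp, by push_cast; ring⟩

lemma DD_nat (hp : p.Prime) (z : ℕ) : DD p 0 (z : ℚ) :=
  ⟨z, 1, nd_one hp, by push_cast; ring⟩

lemma DD_zero (hp : p.Prime) (n : ℕ) : DD p n 0 :=
  ⟨0, 1, nd_one hp, by push_cast; ring⟩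

lemma DD_add (hp : p.Prime) {n : ℕ} {x y : ℚ} (hx : DD p n x) (hy : DD p n y) :
    DD p n (x + y) := by
  obtain ⟨a, b, hb, h⟩ := hx
  obtain ⟨c, d, hd, k⟩ := hy
  refine ⟨a * d + c * b, b * d, nd_mul hp hb hd, ?_⟩
  push_cast
  linear_combination (d : ℚ) * h + (b : ℚ) * k

lemma DD_mul (hp : p.Prime) {n m : ℕ} {x y : ℚ} (hx : DD p n x) (hy : DD p m y) :
    DD p (n + m) (x * y) := by
  obtain ⟨a, b, hb, h⟩ := hx
  obtain ⟨c, d, hd, k⟩ := hy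
  refine ⟨a * c, b * d, nd_mul hp hb hd, ?_⟩
  push_cast
  rw [pow_add]
  linear_combination (y * d : ℚ) * h + ((p : ℚ) ^ n * a : ℚ) * k

lemma DD_mono {n m : ℕ} (h : m ≤ n) {x : ℚ} (hx : DD p n x) : DD p m x := by
  obtain ⟨a, b, hb, k⟩ := hx
  obtain ⟨e, rfl⟩ := Nat.exists_eq_add_of_le h
  refine ⟨p ^ e * a, b, hb, ?_⟩
  push_cast
  rw [k, pow_add]; ring

lemma DD_neg {n : ℕ} {x : ℚ} (hx : DD p n x) : DD p n (-x) := by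
  obtain ⟨a, b, hb, k⟩ := hx
  exact ⟨-a, b, hb, by push_cast; linear_combination -k⟩

lemma DD_sub (hp : p.Prime) {n : ℕ} {x y : ℚ} (hx : DD p n x) (hy : DD p n y) :
    DD p n (x - y) := by
  rw [sub_eq_add_neg]; exact DD_add hp hx (DD_neg hy)

lemma DD_sum (hp : p.Prime) {n : ℕ} {ι : Type*} (s : Finset ι) (f : ι → ℚ)
    (h : ∀ i ∈ s, DD p n (f i)) : DD p n (∑ i ∈ s, f i) := by
  classical
  induction s using Finset.induction_on with
  | empty => simpa using DD_zero hp n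
  | insert a s ha ih =>
    rw [Finset.sum_insert ha]
    exact DD_add hp (h a (by simp)) (ih fun i hi => h i (by simp [hi]))

lemma DD_of_mul_int {n : ℕ} (hp : p.Prime) {x : ℚ} {c : ℤ} (hc : ¬ ((p : ℤ) ∣ c))
    (h : DD p n (c * x)) : DD p n x := by
  obtain ⟨a, b, hb, k⟩ := h
  refine ⟨a, c * b, nd_mul hp hc hb, ?_⟩
  push_cast
  linear_combination k

lemma DD_mul0 (hp : p.Prime) {n : ℕ} {x y : ℚ} (hx : DD p n x) (hy : DD p 0 y) :
    DD p n (x * y) := DD_mul hp hx hy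

/-- valuation of a quotient of a prime power by an integer -/
lemma DD_div (hp : p.Prime) {n a j : ℕ} (hj : ¬ p ^ (a + 1) ∣ j) :
    DD p n ((p : ℚ) ^ (n + a) / j) := by
  have hj0 : j ≠ 0 := by rintro rfl; exact hj (dvd_zero _)
  obtain ⟨c, q, hq, rfl⟩ := Nat.exists_eq_pow_mul_and_not_dvd hj0 p hp.ne_one
  have hca : c ≤ a := by
    by_contra hlt
    exact hj ((pow_dvd_pow p (by omega)).mul_right q)
  obtain ⟨e, rfl⟩ := Nat.exists_eq_add_of_le hca
  refine ⟨p ^ e, q, by exact_mod_cast hq, ?_⟩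
  have hp0 : (p : ℚ) ≠ 0 := by exact_mod_cast hp.ne_zero
  have hq0 : (q : ℚ) ≠ 0 := by
    rintro h
    exact hj0 (by have : q = 0 := by exact_mod_cast h
                  simp [this])
  push_cast
  field_simp
  ring

lemma UU_one (hp : p.Prime) (n : ℕ) : UU p n 1 := by
  unfold UU; simpa using DD_zero hp n

lemma UU_int (hp : p.Prime) {n : ℕ} {x : ℚ} (hx : UU p n x) : DD p 0 x := by
  have h1 : DD p 0 (x - 1) := DD_mono (Nat.zero_le n) hx
  have := DD_add hp h1 (DD_int hp 1)
  simpa using this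

lemma UU_mono {n m : ℕ} (h : m ≤ n) {x : ℚ} (hx : UU p n x) : UU p m x := DD_mono h hx

lemma UU_mul (hp : p.Prime) {n : ℕ} {x y : ℚ} (hx : UU p n x) (hy : UU p n y) :
    UU p n (x * y) := by
  have e : x * y - 1 = (x - 1) * y + (y - 1) := by ring
  unfold UU
  rw [e]
  exact DD_add hp (DD_mul0 hp hx (UU_int hp hy)) hy

lemma nd_unit (hp : p.Prime) {n : ℕ} (hn : 1 ≤ n) {a b : ℤ} (hb : ¬ ((p : ℤ) ∣ b)) :
    ¬ ((p : ℤ) ∣ b + p ^ n * a) := by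
  intro h
  apply hb
  have : (p : ℤ) ∣ p ^ n * a := (dvd_pow_self _ (by omega)).mul_right a
  exact (dvd_add_left this).mp h

lemma UU_ne (hp : p.Prime) {n : ℕ} (hn : 1 ≤ n) {x : ℚ} (hx : UU p n x) : x ≠ 0 := by
  rintro rfl
  obtain ⟨a, b, hb, k⟩ := hx
  have := nd_unit hp hn (a := a) hb
  apply this
  have e : b + (p : ℤ) ^ n * a = 0 := by
    have : ((b + (p : ℤ) ^ n * a : ℤ) : ℚ) = 0 := by push_cast; linear_combination -k
    exact_mod_cast this
  rw [e]; exact dvd_zero _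

lemma UU_inv (hp : p.Prime) {n : ℕ} (hn : 1 ≤ n) {x : ℚ} (hx : UU p n x) : UU p n x⁻¹ := by
  have hx0 := UU_ne hp hn hx
  obtain ⟨a, b, hb, k⟩ := hx
  refine ⟨-a, b + p ^ n * a, nd_unit hp hn hb, ?_⟩
  push_cast
  have : x * b = b + (p : ℚ) ^ n * a := by linear_combination k
  rw [← this]
  field_simp
  linear_combination -k

lemma UU_div (hp : p.Prime) {n : ℕ} (hn : 1 ≤ n) {x y : ℚ} (hx : UU p n x) (hy : UU p n y) :
    UU p n (x / y) := by
  rw [div_eq_mul_inv]; exact UU_mul hp hx (UU_inv hp hn hy)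

lemma UU_prod (hp : p.Prime) {n : ℕ} {ι : Type*} (s : Finset ι) (f : ι → ℚ)
    (h : ∀ i ∈ s, UU p n (f i)) : UU p n (∏ i ∈ s, f i) := by
  classical
  induction s using Finset.induction_on with
  | empty => simpa using UU_one hp n
  | insert a s ha ih =>
    rw [Finset.prod_insert ha]
    exact UU_mul hp (h a (by simp)) (ih fun i hi => h i (by simp [hi]))

lemma UU_pow (hp : p.Prime) {n : ℕ} {x : ℚ} (hx : UU p n x) : UU p n (x ^ 2) := by
  rw [pow_two]; exact UU_mul hp hx hx

lemma UU_one_sub {n : ℕ} {x : ℚ} (hx : DD p n x) : UU p n (1 - x) := by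
  unfold UU
  have : 1 - x - 1 = -x := by ring
  rw [this]; exact DD_neg hx

lemma UU_one_add {n : ℕ} {x : ℚ} (hx : DD p n x) : UU p n (1 + x) := by
  unfold UU
  have : 1 + x - 1 = x := by ring
  rw [this]; exact hx

end basic

/-- summand of the terminating series -/
def FF (l k : ℕ) : ℚ :=
  (∏ i ∈ range k, ((i : ℚ) + 1/2)) * (∏ i ∈ range k, ((i : ℚ) - l)) *
    (∏ i ∈ range k, ((i : ℚ) + l + 1)) / (k.factorial : ℚ) ^ 3

/-- the quotient of `(1/2)_t` by `t!` -/
def ww (t : ℕ) : ℚ := ∏ j ∈ range t, ((2 * (j : ℚ) + 1) / (2 * j + 2))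

lemma prod_shift_neg (l k : ℕ) :
    (∏ i ∈ range k, ((i : ℚ) - l)) * ((l + 1) * (l + 2)) =
      (∏ i ∈ range k, ((i : ℚ) - (l + 2 : ℕ))) * ((l + 1 - k) * (l + 2 - k)) := by
  induction k with
  | zero => simp
  | succ k ih =>
    rw [prod_range_succ, prod_range_succ]
    push_cast at *
    linear_combination ((k : ℚ) - l) * ih

lemma prod_shift_pos (l k : ℕ) :
    (∏ i ∈ range k, ((i : ℚ) + (l + 2 : ℕ) + 1)) * ((l + 1) * (l + 2)) =
      (∏ i ∈ range k, ((i : ℚ) + l + 1)) * ((l + 1 + k) * (l + 2 + k)) := by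
  induction k with
  | zero => simp
  | succ k ih =>
    rw [prod_range_succ, prod_range_succ]
    push_cast at *
    linear_combination ((k : ℚ) + l + 3) * ih

/-- auxiliary summand -/
def CC (l k : ℕ) : ℚ :=
  (∏ i ∈ range k, ((i : ℚ) + 1/2)) * (∏ i ∈ range k, ((i : ℚ) - (l + 2 : ℕ))) *
    (∏ i ∈ range k, ((i : ℚ) + l + 1)) / (k.factorial : ℚ) ^ 3

lemma FF_eq1 (l k : ℕ) : FF l k * ((l + 1) * (l + 2)) = CC l k * ((l + 1 - k) * (l + 2 - k)) := by
  unfold FF CC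
  have := prod_shift_neg l k
  linear_combination (∏ i ∈ range k, ((i : ℚ) + 1/2)) * (∏ i ∈ range k, ((i : ℚ) + l + 1)) /
    (k.factorial : ℚ) ^ 3 * this

lemma FF_eq2 (l k : ℕ) :
    FF (l + 2) k * ((l + 1) * (l + 2)) = CC l k * ((l + 1 + k) * (l + 2 + k)) := by
  unfold FF CC
  have := prod_shift_pos l k
  linear_combination (∏ i ∈ range k, ((i : ℚ) + 1/2)) *
    (∏ i ∈ range k, ((i : ℚ) - (l + 2 : ℕ))) / (k.factorial : ℚ) ^ 3 * this

lemma CC_succ (l k : ℕ) : CC l (k + 1) * ((k : ℚ) + 1) ^ 3 =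
    CC l k * ((k + 1/2) * (k - (l + 2)) * (k + l + 1)) := by
  unfold CC
  rw [prod_range_succ, prod_range_succ, prod_range_succ, Nat.factorial_succ]
  push_cast
  have : (k.factorial : ℚ) ≠ 0 := by exact_mod_cast k.factorial_ne_zero
  have : (k : ℚ) + 1 ≠ 0 := by positivity
  generalize ∏ i ∈ range k, ((i : ℚ) + 1/2) = a
  generalize ∏ i ∈ range k, ((i : ℚ) - (l + 2)) = b
  field_simp

lemma tele (l K : ℕ) :
    ∑ k ∈ range K, (((l : ℚ) + 2) ^ 2 * FF (l + 2) k - ((l : ℚ) + 1) ^ 2 * FF l k) =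
      - 2 * (2 * l + 3) * (K : ℚ) ^ 3 / ((l + 1) * (l + 2)) * CC l K := by
  induction K with
  | zero => simp
  | succ K ih =>
    rw [sum_range_succ, ih]
    have h1 := FF_eq1 l K
    have h2 := FF_eq2 l K
    have h3 := CC_succ l K
    have e1 : (l : ℚ) + 1 ≠ 0 := by positivity
    have e2 : (l : ℚ) + 2 ≠ 0 := by positivity
    push_cast
    field_simp
    linear_combination ((l : ℚ) + 2) ^ 2 * h2 - ((l : ℚ) + 1) ^ 2 * h1
      + 2 * (2 * l + 3) * h3

lemma CC_zero (l K : ℕ) (h : l + 2 < K) : CC l K = 0 := by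
  unfold CC
  rw [prod_eq_zero (f := fun i : ℕ => (i : ℚ) - (l + 2 : ℕ)) (mem_range.mpr h) (by simp)]
  simp

lemma FF_zero (l K : ℕ) (h : l < K) : FF l K = 0 := by
  unfold FF
  rw [prod_eq_zero (f := fun i : ℕ => (i : ℚ) - l) (mem_range.mpr h) (by simp)]
  simp

lemma rec_sum (l N : ℕ) (h : l + 2 < N) :
    ((l : ℚ) + 2) ^ 2 * ∑ k ∈ range N, FF (l + 2) k =
      ((l : ℚ) + 1) ^ 2 * ∑ k ∈ range N, FF l k := by
  have := tele l N
  rw [CC_zero l N h, mul_zero, sum_sub_distrib, ← mul_sum, ← mul_sum] at this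
  linarith

lemma whipple (N : ℕ) (t : ℕ) :
    (2 * t < N → ∑ k ∈ range N, FF (2 * t) k = ww t ^ 2) ∧
    (2 * t + 1 < N → ∑ k ∈ range N, FF (2 * t + 1) k = 0) := by
  induction t with
  | zero =>
    constructor
    · intro h
      obtain ⟨n, rfl⟩ : ∃ n, N = n + 1 := ⟨N - 1, by omega⟩
      rw [sum_range_succ', sum_eq_zero]
      · simp [FF, ww]
      · intro k _; exact FF_zero _ _ (by omega)
    · intro h
      obtain ⟨n, rfl⟩ : ∃ n, N = n + 2 := ⟨N - 2, by omega⟩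
      rw [sum_range_succ', sum_range_succ', sum_eq_zero]
      · simp [FF]; norm_num
      · intro k _; exact FF_zero _ _ (by omega)
  | succ t ih =>
    constructor
    · intro h
      have h1 := ih.1 (by omega)
      have h2 := rec_sum (2 * t) N (by omega)
      rw [h1] at h2
      have e : 2 * (t + 1) = 2 * t + 2 := by ring
      rw [e]
      unfold ww at *
      rw [prod_range_succ]
      have : 2 * (t : ℚ) + 2 ≠ 0 := by positivity
      push_cast at h2
      field_simp
      field_simp at h2
      linear_combination h2
    · intro h
      have h1 := ih.2 (by omega)
      have h2 := rec_sum (2 * t + 1) N (by omega)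
      rw [h1] at h2
      have e : 2 * (t + 1) + 1 = 2 * t + 1 + 2 := by ring
      rw [e]
      have : ((2 * t + 1 : ℕ) : ℚ) + 2 ≠ 0 := by positivity
      rw [mul_zero] at h2
      exact (mul_eq_zero.mp h2).resolve_left (pow_ne_zero 2 this)

/-- interpolation nodes -/
def vv (l : ℕ) : ℚ := ((l : ℚ) + 1/2) ^ 2

/-- interpolation weights -/
def BB (N l : ℕ) : ℚ := ∏ j ∈ (range N).erase l, (vv j / (vv j - vv l))

lemma vv_sub (j l : ℕ) : vv j - vv l = ((j : ℚ) - l) * (j + l + 1) := by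
  unfold vv; ring

lemma vv_ne {j l : ℕ} (h : j ≠ l) : vv j - vv l ≠ 0 := by
  rw [vv_sub]
  refine mul_ne_zero ?_ (by positivity)
  rw [sub_ne_zero]
  exact_mod_cast h

lemma vv_inj : Function.Injective vv := by
  intro j l h
  by_contra hne
  exact vv_ne hne (sub_eq_zero.mpr h)

open Polynomial in
lemma lagrange (N : ℕ) :
    ∑ k ∈ range N, risingFactorial (1/2) k ^ 3 / (k.factorial : ℚ) ^ 3 =
      ∑ l ∈ range N, (∑ k ∈ range N, FF l k) * BB N l := by
  set P : ℚ[X] := ∑ k ∈ range N, C ((∏ i ∈ range k, ((i : ℚ) + 1/2)) / (k.factorial : ℚ) ^ 3) *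
    ∏ i ∈ range k, (C (vv i) - X) with hP
  have hev : ∀ x, P.eval x = ∑ k ∈ range N, ((∏ i ∈ range k, ((i : ℚ) + 1/2)) /
      (k.factorial : ℚ) ^ 3) * ∏ i ∈ range k, (vv i - x) := by
    intro x
    rw [hP, eval_finsetSum]
    refine sum_congr rfl fun k _ => ?_
    rw [eval_mul, eval_C, eval_prod]
    simp
  have hdeg : P.degree < #(range N) := by
    rw [card_range, hP]
    refine (degree_sum_le _ _).trans_lt ?_
    refine (Finset.sup_lt_iff (WithBot.bot_lt_coe N)).mpr ?_
    intro k hk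
    have hk' : k < N := mem_range.mp hk
    refine lt_of_le_of_lt (b := (k : WithBot ℕ)) ?_ (Nat.cast_lt.mpr hk')
    refine (degree_mul_le _ _).trans ?_
    rw [← zero_add (k : WithBot ℕ)]
    refine add_le_add degree_C_le ?_
    refine (degree_prod_le _ _).trans ?_
    refine (Finset.sum_le_card_nsmul _ _ 1 ?_).trans ?_
    · intro i _
      refine (degree_sub_le _ _).trans ?_
      exact max_le (degree_C_le.trans (by norm_num)) degree_X_le
    · simp
  have h := Lagrange.eq_interpolate (s := range N) (v := vv) (vv_inj.injOn) hdeg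
  have h0 := congrArg (eval 0) h
  rw [hev, Lagrange.interpolate_apply, eval_finsetSum] at h0
  have e1 : ∑ k ∈ range N, risingFactorial (1/2) k ^ 3 / (k.factorial : ℚ) ^ 3 =
      ∑ k ∈ range N, ((∏ i ∈ range k, ((i : ℚ) + 1/2)) /
      (k.factorial : ℚ) ^ 3) * ∏ i ∈ range k, (vv i - 0) := by
    refine sum_congr rfl fun k _ => ?_
    have a1 : ∏ i ∈ range k, (vv i - 0) = (∏ i ∈ range k, ((i : ℚ) + 1/2)) ^ 2 := by
      rw [← prod_pow]
      exact prod_congr rfl fun i _ => by simp [vv]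
    have a2 : risingFactorial (1/2) k = ∏ i ∈ range k, ((i : ℚ) + 1/2) :=
      prod_congr rfl fun i _ => by ring
    rw [a1, a2]; ring
  rw [e1, h0]
  refine sum_congr rfl fun l hl => ?_
  rw [eval_mul, eval_C, hev]
  congr 1
  · refine sum_congr rfl fun k _ => ?_
    unfold FF
    have : ∏ i ∈ range k, (vv i - vv l) =
      (∏ i ∈ range k, ((i : ℚ) - l)) * (∏ i ∈ range k, ((i : ℚ) + l + 1)) := by
      rw [← prod_mul_distrib]
      exact prod_congr rfl fun i _ => vv_sub i l
    rw [this]; ring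
  · unfold Lagrange.basis BB
    rw [eval_prod]
    refine prod_congr rfl fun j hj => ?_
    have hjl : j ≠ l := ne_of_mem_erase hj
    unfold Lagrange.basisDivisor
    simp only [eval_mul, eval_C, eval_sub, eval_X]
    have h1 := vv_ne hjl
    have h2 := vv_ne hjl.symm
    field_simp
    ring

lemma base_prod (l : ℕ) :
    ∏ j ∈ range l, (vv j - vv l) = (-1) ^ l * ((2 * l).factorial : ℚ) := by
  have e1 : ∏ j ∈ range l, (vv j - vv l) =
      ∏ j ∈ range l, ((-1) * (((l - j : ℕ) : ℚ) * ((l + 1 + j : ℕ) : ℚ))) := by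
    refine prod_congr rfl fun j hj => ?_
    have : j ≤ l := (mem_range.mp hj).le
    rw [vv_sub]; push_cast [this]; ring
  rw [e1, prod_mul_distrib, prod_const, card_range, prod_mul_distrib]
  congr 1
  rw [← Nat.cast_prod, ← Nat.cast_prod, ← Nat.descFactorial_eq_prod_range,
    ← Nat.ascFactorial_eq_prod_range, Nat.descFactorial_self, ← Nat.cast_mul,
    Nat.factorial_mul_ascFactorial]
  congr 2; ring

lemma BB_formula (l s : ℕ) :
    BB (l + 1 + s) l = 4 * (∏ i ∈ range (l + 1 + s), ((i : ℚ) + 1/2)) ^ 2 * (-1) ^ l /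
      ((2 * l + 1) * (s.factorial : ℚ) * ((2 * l + 1 + s).factorial : ℚ)) := by
  induction s with
  | zero =>
    have e : (range (l + 1 + 0)).erase l = range l := by
      ext j; simp; omega
    unfold BB
    rw [e, prod_div_distrib, base_prod]
    have e2 : ∏ j ∈ range l, vv j = (∏ i ∈ range l, ((i : ℚ) + 1/2)) ^ 2 := by
      rw [← prod_pow]; rfl
    rw [e2, add_zero, prod_range_succ, add_zero, Nat.factorial_succ (2 * l)]
    push_cast
    have h1 : ((2 * l).factorial : ℚ) ≠ 0 := by exact_mod_cast Nat.factorial_ne_zero _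
    have h2 : (2 * (l : ℚ) + 1) ≠ 0 := by positivity
    have h3 : ((-1 : ℚ) ^ l) ≠ 0 := by positivity
    have h4 : ((-1 : ℚ) ^ l) ^ 2 = 1 := by rw [← pow_mul, mul_comm, pow_mul]; simp
    generalize ∏ i ∈ range l, ((i : ℚ) + 1/2) = a
    generalize ((2 * l).factorial : ℚ) = b at *
    generalize (-1 : ℚ) ^ l = c at *
    simp only [Nat.factorial_zero, Nat.cast_one, mul_one]
    field_simp
    linear_combination (- 4 * a ^ 2) * h4
  | succ s ih =>
    have e : (range (l + 1 + (s + 1))).erase l =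
        insert (l + 1 + s) ((range (l + 1 + s)).erase l) := by
      ext j; simp; omega
    unfold BB at *
    rw [e, prod_insert (by simp), ih, ← add_assoc (l + 1) s 1, prod_range_succ,
      Nat.factorial_succ s, ← add_assoc (2 * l + 1) s 1, Nat.factorial_succ (2 * l + 1 + s), vv_sub]
    unfold vv
    push_cast
    have h1 : (s.factorial : ℚ) ≠ 0 := by exact_mod_cast Nat.factorial_ne_zero _
    have h2 : ((2 * l + 1 + s).factorial : ℚ) ≠ 0 := by exact_mod_cast Nat.factorial_ne_zero _
    have h3 : (2 * (l : ℚ) + 1) ≠ 0 := by positivity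
    have h4 : ((s : ℚ) + 1) ≠ 0 := by positivity
    have h5 : (2 * (l : ℚ) + 1 + s + 1) ≠ 0 := by positivity
    have h6 : ((l : ℚ) + 1 + s - l) = s + 1 := by ring
    have h7 : ((l : ℚ) + 1 + s + l + 1) = 2 * l + 1 + s + 1 := by ring
    rw [h6, h7]
    generalize ∏ i ∈ range (l + 1 + s), ((i : ℚ) + 1/2) = a
    field_simp

lemma sum_even_odd (m : ℕ) (g : ℕ → ℚ) : ∑ l ∈ range (2 * m + 1), g l =
    ∑ t ∈ range (m + 1), g (2 * t) + ∑ t ∈ range m, g (2 * t + 1) := by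
  induction m with
  | zero => simp
  | succ m ih =>
    have : 2 * (m + 1) + 1 = (2 * m + 1) + 1 + 1 := by ring
    rw [this, sum_range_succ, sum_range_succ, ih, sum_range_succ _ (m + 1), sum_range_succ _ m,
      sum_range_succ _ m]
    have : 2 * (m + 1) = 2 * m + 1 + 1 := by ring
    rw [this]; ring

/-- product of the factors `1 - 2N/j` -/
def ZZ (N n : ℕ) : ℚ := ∏ j ∈ range n, (1 - 2 * ((N : ℚ) / ((j + 1 : ℕ) : ℚ)))

/-- product of the factors `1 - N/(2j+1)` -/
def VV (N t : ℕ) : ℚ := ∏ j ∈ range t, (1 - (N : ℚ) / ((2 * j + 1 : ℕ) : ℚ))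

/-- the constant in the weights -/
def KK (N : ℕ) : ℚ := 4 * (∏ i ∈ range N, ((i : ℚ) + 1/2)) ^ 2 / ((2 * N - 1).factorial : ℚ)

lemma ZZ_eq (N s : ℕ) (hs : Even s) (hN : s < 2 * N) :
    ZZ N s * (s.factorial * (2 * N - 1 - s).factorial) = ((2 * N - 1).factorial : ℚ) := by
  have e : ZZ N s = (∏ j ∈ range s, ((2 * N - 1 - j : ℕ) : ℚ)) / (∏ j ∈ range s, ((j + 1 : ℕ) : ℚ)) := by
    unfold ZZ
    rw [← prod_div_distrib]
    have : ∏ j ∈ range s, (((2 * N - 1 - j : ℕ) : ℚ) / ((j + 1 : ℕ) : ℚ)) =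
      ∏ j ∈ range s, ((-1) * (1 - 2 * ((N : ℚ) / ((j + 1 : ℕ) : ℚ)))) := by
      refine prod_congr rfl fun j hj => ?_
      have hj' := mem_range.mp hj
      have : ((2 * N - 1 - j : ℕ) : ℚ) = 2 * N - 1 - j := by
        rw [Nat.sub_sub, Nat.cast_sub (by omega)]; push_cast; ring
      rw [this]
      push_cast
      have : (j : ℚ) + 1 ≠ 0 := by positivity
      field_simp
      ring
    rw [this, prod_mul_distrib, prod_const, card_range, hs.neg_one_pow, one_mul]
  rw [e, ← Nat.cast_prod, ← Nat.cast_prod, prod_range_add_one_eq_factorial,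
    ← Nat.descFactorial_eq_prod_range]
  have h1 : (s.factorial : ℚ) ≠ 0 := by exact_mod_cast Nat.factorial_ne_zero _
  field_simp
  have := Nat.factorial_mul_descFactorial (n := 2 * N - 1) (k := s) (by omega)
  rw [← this]; push_cast; ring

lemma KK_eq (N : ℕ) (hN : 1 ≤ N) : KK N * 16 ^ N = 8 * N * ((2 * N).choose N : ℚ) := by
  have h0 : ∀ n : ℕ, (∏ i ∈ range n, ((i : ℚ) + 1/2)) * 4 ^ n * n.factorial =
      ((2 * n).factorial : ℚ) := by
    intro n
    induction n with
    | zero => simp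
    | succ n ih =>
      have : 2 * (n + 1) = 2 * n + 1 + 1 := by ring
      rw [prod_range_succ, this, Nat.factorial_succ (2 * n + 1), Nat.factorial_succ (2 * n),
        Nat.factorial_succ n]
      push_cast
      rw [← ih]; ring
  have h1 := h0 N
  have h2 : ((2 * N).factorial : ℚ) = 2 * N * ((2 * N - 1).factorial : ℚ) := by
    have := Nat.mul_factorial_pred (n := 2 * N) (by omega)
    rw [← this]; push_cast; ring
  have h3 : ((2 * N).choose N : ℚ) * N.factorial * N.factorial = ((2 * N).factorial : ℚ) := by
    have := Nat.choose_mul_factorial_mul_factorial (n := 2 * N) (k := N) (by omega)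
    rw [← this, show 2 * N - N = N by omega]; push_cast; ring
  unfold KK
  generalize ∏ i ∈ range N, ((i : ℚ) + 1/2) = a at *
  have h4 : ((2 * N - 1).factorial : ℚ) ≠ 0 := by exact_mod_cast Nat.factorial_ne_zero _
  have h5 : (N.factorial : ℚ) ≠ 0 := by exact_mod_cast Nat.factorial_ne_zero _
  have h6 : (16 : ℚ) ^ N = 4 ^ N * 4 ^ N := by rw [← mul_pow]; norm_num
  have h7 : (N : ℚ) ≠ 0 := by positivity
  rw [h6]
  generalize (4 : ℚ) ^ N = q at *
  generalize (N.factorial : ℚ) = f at *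
  generalize ((2 * N).choose N : ℚ) = c at *
  rw [div_mul_eq_mul_div, div_eq_iff h4]
  have h8 : f ^ 2 ≠ 0 := pow_ne_zero 2 h5
  apply mul_right_cancel₀ h8
  have h9 : a * q * f * (a * q * f) = c * f * f * (2 * N * ((2 * N - 1).factorial : ℚ)) := by
    rw [h1, h3, h2]
  linear_combination 4 * h9

lemma BB_even (m t : ℕ) (ht : t ≤ m) :
    BB (2 * m + 1) (2 * t) =
      KK (2 * m + 1) * (ZZ (2 * m + 1) (2 * (m - t)) / ((4 * t + 1 : ℕ) : ℚ)) := by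
  have h1 := BB_formula (2 * t) (2 * (m - t))
  have h2 := ZZ_eq (2 * m + 1) (2 * (m - t)) (by simp) (by omega)
  rw [show 2 * t + 1 + 2 * (m - t) = 2 * m + 1 by omega,
    show 2 * (2 * t) + 1 + 2 * (m - t) = 2 * (2 * m + 1) - 1 - 2 * (m - t) by omega] at h1
  rw [h1]
  unfold KK
  have h3 : (((2 * (2 * m + 1)) - 1).factorial : ℚ) ≠ 0 := by exact_mod_cast Nat.factorial_ne_zero _
  have h4 : ((2 * (m - t)).factorial : ℚ) ≠ 0 := by exact_mod_cast Nat.factorial_ne_zero _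
  have h5 : ((2 * (2 * m + 1) - 1 - 2 * (m - t)).factorial : ℚ) ≠ 0 := by
    exact_mod_cast Nat.factorial_ne_zero _
  rw [← h2] at h3 ⊢
  have h6 : ZZ (2 * m + 1) (2 * (m - t)) ≠ 0 := left_ne_zero_of_mul h3
  have h7 : (4 * (t : ℚ) + 1) ≠ 0 := by positivity
  have h8 : (2 * (2 * (t : ℚ)) + 1) = 4 * t + 1 := by ring
  push_cast
  rw [h8, show (-1 : ℚ) ^ (2 * t) = 1 by simp]
  generalize ∏ i ∈ range (2 * m + 1), ((i : ℚ) + 1/2) = a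
  field_simp

lemma main_sum (m : ℕ) :
    ∑ k ∈ range (2 * m + 1), risingFactorial (1/2) k ^ 3 / (k.factorial : ℚ) ^ 3 =
      ∑ t ∈ range (m + 1), ww t ^ 2 * BB (2 * m + 1) (2 * t) := by
  rw [lagrange, sum_even_odd, sum_eq_zero (s := range m), add_zero]
  · refine sum_congr rfl fun t ht => ?_
    have := mem_range.mp ht
    rw [(whipple (2 * m + 1) t).1 (by omega)]
  · intro t ht
    have := mem_range.mp ht
    rw [(whipple (2 * m + 1) t).2 (by omega), zero_mul]

lemma pow_mod4 {p : ℕ} (h : p % 4 = 3) (j : ℕ) : p ^ (2 * j) % 4 = 1 ∧ p ^ (2 * j + 1) % 4 = 3 := by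
  induction j with
  | zero => simpa using h
  | succ j ih =>
    have e1 : p ^ (2 * (j + 1)) % 4 = 1 := by
      rw [show 2 * (j + 1) = 2 * j + 1 + 1 by ring, pow_succ, Nat.mul_mod, ih.2, h]
    exact ⟨e1, by rw [pow_succ, Nat.mul_mod, e1, h]⟩

lemma res_three {d x : ℕ} (hd : d % 4 = 3) (hx : d ∣ 4 * x + 1) : 4 * (x % d) + 1 = 3 * d := by
  have hlt : x % d < d := Nat.mod_lt _ (by omega)
  have h1 : d ∣ 4 * (x % d) + 1 := by
    have e : 4 * x + 1 = d * (4 * (x / d)) + (4 * (x % d) + 1) := by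
      have := Nat.div_add_mod x d
      nlinarith
    rw [e] at hx
    exact (Nat.dvd_add_right (Dvd.intro _ rfl)).mp hx
  obtain ⟨c, hc⟩ := h1
  have hc4 : c < 4 := by
    by_contra hge
    have : d * 4 ≤ d * c := Nat.mul_le_mul_left d (by omega)
    omega
  interval_cases c <;> omega

lemma carry {d t m : ℕ} (hd : d % 4 = 3) (hm : d ∣ 2 * m + 1) (ht : t ≤ m) (h : d ∣ 4 * t + 1) :
    d ≤ t % d + (m - t) % d := by
  have h2 : d ∣ 4 * (m - t) + 1 := by
    have e : 4 * (m - t) + 1 = 2 * (2 * m + 1) - (4 * t + 1) := by omega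
    rw [e]
    exact Nat.dvd_sub (hm.mul_left 2) h
  have := res_three hd h
  have := res_three hd h2
  omega

lemma dvd_choose_of_carry {p : ℕ} (hp : p.Prime) {m t b : ℕ} (ht : t ≤ m) (hm : m < p ^ b)
    (S : Finset ℕ) (hS : ∀ j ∈ S, (1 ≤ j ∧ j < b) ∧ p ^ j ≤ t % p ^ j + (m - t) % p ^ j) :
    p ^ #S ∣ m.choose t := by
  rw [hp.pow_dvd_iff_le_factorization (Nat.choose_pos ht).ne']
  have hb : b ≠ 0 ∨ m = 0 := by
    by_cases hb : b = 0
    · right; subst hb; simpa using hm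
    · left; exact hb
  have hlog : Nat.log p m < b + 1 := by
    by_cases hm0 : m = 0
    · subst hm0; simp
    · have := Nat.log_lt_of_lt_pow hm0 hm
      omega
  rw [Nat.factorization_choose hp ht hlog]
  refine card_le_card fun j hj => ?_
  obtain ⟨⟨h1, h2⟩, h3⟩ := hS j hj
  simp only [mem_filter, mem_Ico]
  exact ⟨⟨h1, by omega⟩, h3⟩

section arith

variable {p s m : ℕ}

lemma choose_dvd (hp : p.Prime) (h4 : p % 4 = 3) (hN : 2 * m + 1 = p ^ (2 * s + 2))
    {t i : ℕ} (ht : t ≤ m) (hi : i ≤ 2 * s + 2) (hd : p ^ i ∣ 4 * t + 1) :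
    p ^ ((i + 1) / 2) ∣ m.choose t := by
  have hc : #((range ((i + 1) / 2)).image (fun k => 2 * k + 1)) = (i + 1) / 2 := by
    rw [card_image_of_injective _ (fun a b h => by simpa using h), card_range]
  rw [← hc]
  refine dvd_choose_of_carry hp ht (b := 2 * s + 2) (by omega) _ ?_
  intro j hj
  simp only [mem_image, mem_range] at hj
  obtain ⟨k, hk, rfl⟩ := hj
  refine ⟨by omega, ?_⟩
  refine carry (pow_mod4 h4 k).2 ?_ ht ((pow_dvd_pow p (by omega)).trans hd)
  rw [hN]; exact pow_dvd_pow p (by omega)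

lemma choose_dvd' (hp : p.Prime) (h4 : p % 4 = 3) (hN : 2 * m + 1 = p ^ (2 * s + 2))
    {t i : ℕ} (ht : t ≤ m) (hi : i ≤ 2 * s + 1) (hd : p ^ i ∣ 4 * t + 1)
    (hc : p ^ (2 * s + 1) ≤ t % p ^ (2 * s + 1) + (m - t) % p ^ (2 * s + 1)) :
    p ^ ((i + 2) / 2) ∣ m.choose t := by
  rcases Nat.even_or_odd' i with ⟨k, rfl | rfl⟩
  · have hcard : #(insert (2 * s + 1) ((range k).image (fun k => 2 * k + 1))) = (2 * k + 2) / 2 := by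
      rw [card_insert_of_notMem, card_image_of_injective _ (fun a b h => by simpa using h), card_range]
      · omega
      · simp; omega
    rw [← hcard]
    refine dvd_choose_of_carry hp ht (b := 2 * s + 2) (by omega) _ ?_
    intro j hj
    simp only [mem_insert, mem_image, mem_range] at hj
    rcases hj with rfl | ⟨l, hl, rfl⟩
    · exact ⟨by omega, hc⟩
    · refine ⟨by omega, ?_⟩
      refine carry (pow_mod4 h4 l).2 ?_ ht ((pow_dvd_pow p (by omega)).trans hd)
      rw [hN]; exact pow_dvd_pow p (by omega)
  · have := choose_dvd hp h4 hN ht (by omega) hd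
    rwa [show (2 * k + 1 + 2) / 2 = (2 * k + 1 + 1) / 2 by omega]

/-- the principal part of the terms -/
def gg (m t : ℕ) : ℚ := (m.choose t : ℚ) ^ 2 / ((4 * t + 1 : ℕ) : ℚ)

lemma DD_gg_aux (hp : p.Prime) {t i c n q : ℕ} (hq : ¬ p ∣ q) (hi : 4 * t + 1 = p ^ i * q)
    (hc : p ^ c ∣ m.choose t) (hle : i + n ≤ 2 * c) : DD p n (gg m t) := by
  obtain ⟨w, hw⟩ := hc
  obtain ⟨e, he⟩ := Nat.exists_eq_add_of_le hle
  refine ⟨p ^ e * w ^ 2, q, by exact_mod_cast hq, ?_⟩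
  have hp0 : (p : ℚ) ≠ 0 := by exact_mod_cast hp.ne_zero
  have hq0 : (q : ℚ) ≠ 0 := by
    intro h
    have : q = 0 := by exact_mod_cast h
    simp [this] at hi
  unfold gg
  rw [hi, hw]
  push_cast
  field_simp
  rw [← pow_mul, mul_comm c 2, he]
  ring

lemma val_bound (hp : p.Prime) (h4 : p % 4 = 3) (hN : 2 * m + 1 = p ^ (2 * s + 2))
    {t i q : ℕ} (ht : t ≤ m) (hi : 4 * t + 1 = p ^ i * q) : i ≤ 2 * s + 2 := by
  have hq : 1 ≤ q := by
    rcases Nat.eq_zero_or_pos q with h | h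
    · simp [h] at hi
    · exact h
  by_contra hlt
  have h1 : p ^ (2 * s + 3) ≤ p ^ i := Nat.pow_le_pow_right hp.pos (by omega)
  have h2 : p ^ i * 1 ≤ p ^ i * q := Nat.mul_le_mul_left _ hq
  have h3 : p ^ (2 * s + 3) = p ^ (2 * s + 2) * p := pow_succ _ _
  have h5 : p ^ (2 * s + 2) * 3 ≤ p ^ (2 * s + 2) * p := Nat.mul_le_mul_left _ (by omega)
  omega

lemma val_bound' (hp : p.Prime) (h4 : p % 4 = 3) (hN : 2 * m + 1 = p ^ (2 * s + 2))
    {t i q : ℕ} (ht : t ≤ m) (hi : 4 * t + 1 = p ^ i * q) (hne : 4 * t + 1 ≠ 2 * m + 1) :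
    i ≤ 2 * s + 1 := by
  have h1 := val_bound hp h4 hN ht hi
  by_contra hlt
  have : i = 2 * s + 2 := by omega
  subst this
  rw [← hN] at hi
  have : q < 2 := by
    by_contra hge
    have : (2 * m + 1) * 2 ≤ (2 * m + 1) * q := Nat.mul_le_mul_left _ (by omega)
    omega
  interval_cases q <;> omega

lemma DD_gg0 (hp : p.Prime) (h4 : p % 4 = 3) (hN : 2 * m + 1 = p ^ (2 * s + 2))
    {t : ℕ} (ht : t ≤ m) : DD p 0 (gg m t) := by
  obtain ⟨i, q, hq, hi⟩ := Nat.exists_eq_pow_mul_and_not_dvd (n := 4 * t + 1) (by omega) p hp.ne_one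
  have hb := val_bound hp h4 hN ht hi
  exact DD_gg_aux hp hq hi (choose_dvd hp h4 hN ht hb (hi ▸ Dvd.intro _ rfl)) (by omega)

lemma DD_gg1 (hp : p.Prime) (h4 : p % 4 = 3) (hN : 2 * m + 1 = p ^ (2 * s + 2))
    {t : ℕ} (ht : t ≤ m) (hne : 4 * t + 1 ≠ 2 * m + 1)
    (hc : p ^ (2 * s + 1) ≤ t % p ^ (2 * s + 1) + (m - t) % p ^ (2 * s + 1)) :
    DD p 1 (gg m t) := by
  obtain ⟨i, q, hq, hi⟩ := Nat.exists_eq_pow_mul_and_not_dvd (n := 4 * t + 1) (by omega) p hp.ne_one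
  have hb := val_bound' hp h4 hN ht hi hne
  exact DD_gg_aux hp hq hi (choose_dvd' hp h4 hN ht hb (hi ▸ Dvd.intro _ rfl) hc) (by omega)

lemma not_dvd_N {n q : ℕ} (h0 : 0 < q) (h1 : q < 2 * n) (h2 : q ≠ n) : ¬ n ∣ q := by
  rintro ⟨c, rfl⟩
  have : c < 2 := by
    by_contra hge
    have : n * 2 ≤ n * c := Nat.mul_le_mul_left _ (by omega)
    omega
  interval_cases c <;> omega

/-- `N / j` is divisible by `p` unless `N` divides `j` -/
lemma DD_N1 (hp : p.Prime) (hN : 2 * m + 1 = p ^ (2 * s + 2)) {j : ℕ} (hj : ¬ (2 * m + 1) ∣ j) :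
    DD p 1 (((2 * m + 1 : ℕ) : ℚ) / j) := by
  have := DD_div hp (n := 1) (a := 2 * s + 1) (j := j) (by rwa [hN] at hj)
  rw [hN]; push_cast
  rwa [show 1 + (2 * s + 1) = 2 * s + 2 by ring] at this

lemma DD_N2 (hp : p.Prime) (hN : 2 * m + 1 = p ^ (2 * s + 2)) {j : ℕ}
    (hj : ¬ p ^ (2 * s + 1) ∣ j) : DD p 2 (((2 * m + 1 : ℕ) : ℚ) / j) := by
  have := DD_div hp (n := 2) (a := 2 * s) (j := j) hj
  rw [hN]; push_cast
  rwa [show 2 + 2 * s = 2 * s + 2 by ring] at this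

lemma pair_one (hp : p.Prime) (h4 : p % 4 = 3) (hN : 2 * m + 1 = p ^ (2 * s + 2))
    {t : ℕ} (ht : t ≤ m) (hne : 4 * t + 1 ≠ 2 * m + 1) :
    DD p 2 (gg m t + gg m (m - t)) := by
  have e : gg m t + gg m (m - t) =
      (((2 * m + 1 : ℕ) : ℚ) / ((4 * (m - t) + 1 : ℕ) : ℚ)) * gg m t * (2 : ℕ) := by
    unfold gg
    rw [Nat.choose_symm ht]
    have h1 : ((4 * (m - t) + 1 : ℕ) : ℚ) = 2 * (2 * m + 1) - (4 * t + 1) := by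
      push_cast [ht]; ring
    have h2 : ((4 * (m - t) + 1 : ℕ) : ℚ) ≠ 0 := by positivity
    rw [h1] at h2 ⊢
    push_cast
    have h3 : 4 * (t : ℚ) + 1 ≠ 0 := by positivity
    field_simp
    ring
  rw [e]
  refine DD_mul0 hp ?_ (DD_nat hp 2)
  by_cases hd : p ^ (2 * s + 1) ∣ 4 * (m - t) + 1
  · refine DD_mul hp (n := 1) (m := 1) (DD_N1 hp hN ?_) ?_
    · exact not_dvd_N (by omega) (by omega) (by omega)
    · refine DD_gg1 hp h4 hN ht hne ?_
      have := carry (pow_mod4 h4 s).2 (m := m) (t := m - t)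
        (by rw [hN]; exact pow_dvd_pow p (by omega)) (by omega) hd
      rw [show m - (m - t) = t by omega] at this
      omega
  · exact DD_mul0 hp (DD_N2 hp hN hd) (DD_gg0 hp h4 hN ht)

end arith

/-- correction factor for factorials -/
def RR (M a b : ℕ) : ℚ := ∏ j ∈ range b, (1 + a * ((M : ℚ) / ((j + 1 : ℕ) : ℚ)))

lemma fact_RR (M a b : ℕ) :
    ((a * M + b).factorial : ℚ) = (a * M).factorial * b.factorial * RR M a b := by
  unfold RR
  induction b with
  | zero => simp
  | succ b ih =>
    rw [← add_assoc, Nat.factorial_succ, prod_range_succ, Nat.factorial_succ]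
    push_cast at *
    rw [ih]
    have : (b : ℚ) + 1 ≠ 0 := by positivity
    field_simp
    ring

lemma UU_RR {p s : ℕ} (hp : p.Prime) (a b : ℕ) (hb : b < p ^ (2 * s + 1)) :
    UU p 1 (RR (p ^ (2 * s + 1)) a b) := by
  refine UU_prod hp _ _ fun j hj => UU_one_add ?_
  have hj' := mem_range.mp hj
  rw [mul_comm]
  refine DD_mul0 hp ?_ (DD_nat hp a)
  have := DD_div hp (n := 1) (a := 2 * s) (j := j + 1) (Nat.not_dvd_of_pos_of_lt (by omega) (by omega))
  push_cast at *
  rwa [add_comm 1 (2 * s)] at this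

lemma choose_RR (M u0 μ u v : ℕ) (hu : u ≤ u0) (hv : v ≤ μ) :
    ((u0 * M + μ).choose (u * M + v) : ℚ) * (((u * M).factorial * v.factorial * RR M u v) *
      (((u0 - u) * M).factorial * (μ - v).factorial * RR M (u0 - u) (μ - v))) =
      ((u0 * M + μ).factorial : ℚ) := by
  have hle : u * M ≤ u0 * M := Nat.mul_le_mul_right M hu
  have e : u0 * M + μ - (u * M + v) = (u0 - u) * M + (μ - v) := by
    rw [Nat.sub_mul]; omega
  have h1 := Nat.choose_mul_factorial_mul_factorial (n := u0 * M + μ) (k := u * M + v) (by omega)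
  rw [e] at h1
  have h2 : (((u0 * M + μ).choose (u * M + v) * (u * M + v).factorial *
    ((u0 - u) * M + (μ - v)).factorial : ℕ) : ℚ) = ((u0 * M + μ).factorial : ℚ) := by rw [h1]
  push_cast at h2
  rw [fact_RR M u v, fact_RR M (u0 - u) (μ - v)] at h2
  linear_combination h2

lemma pair_two {p s u0 μ u v : ℕ} (hp : p.Prime) (h4 : p % 4 = 3)
    (hM : 2 * μ + 1 = p ^ (2 * s + 1)) (hu : u ≤ u0) (hv : v ≤ μ)
    (h0 : DD p 0 (gg (u0 * p ^ (2 * s + 1) + μ) (u * p ^ (2 * s + 1) + v))) :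
    DD p 1 (gg (u0 * p ^ (2 * s + 1) + μ) (u * p ^ (2 * s + 1) + v) +
      gg (u0 * p ^ (2 * s + 1) + μ) (u * p ^ (2 * s + 1) + (μ - v))) := by
  have hM4 := (pow_mod4 h4 s).2
  have c1 := choose_RR (p ^ (2 * s + 1)) u0 μ u v hu hv
  have c2 := choose_RR (p ^ (2 * s + 1)) u0 μ u (μ - v) hu (by omega)
  rw [show μ - (μ - v) = v by omega] at c2
  have r1 := UU_RR (s := s) hp u v (by omega)
  have r2 := UU_RR (s := s) hp (u0 - u) (μ - v) (by omega)
  have r3 := UU_RR (s := s) hp u (μ - v) (by omega)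
  have r4 := UU_RR (s := s) hp (u0 - u) v (by omega)
  have hnd : ¬ p ^ (2 * s + 1) ∣ 4 * (u * p ^ (2 * s + 1) + v) + 1 := by
    intro hd
    have := res_three hM4 hd
    rw [Nat.mul_add_mod', Nat.mod_eq_of_lt (by omega)] at this
    omega
  have d1 := DD_div hp (n := 1) (a := 2 * s) hnd
  have hMq : ((p : ℚ) ^ (2 * s + 1)) = 2 * μ + 1 := by exact_mod_cast hM.symm
  have hκ : UU p 1 (1 - (p : ℚ) ^ (1 + 2 * s) / ((4 * (u * p ^ (2 * s + 1) + v) + 1 : ℕ) : ℚ) *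
    ((2 * (4 * u + 1) : ℕ) : ℚ)) := UU_one_sub (DD_mul0 hp d1 (DD_nat hp _))
  generalize hR1 : RR (p ^ (2 * s + 1)) u v = R1 at *
  generalize hR2 : RR (p ^ (2 * s + 1)) (u0 - u) (μ - v) = R2 at *
  generalize hR3 : RR (p ^ (2 * s + 1)) u (μ - v) = R3 at *
  generalize hR4 : RR (p ^ (2 * s + 1)) (u0 - u) v = R4 at *
  have n1 := UU_ne hp le_rfl r1
  have n2 := UU_ne hp le_rfl r2
  have n3 := UU_ne hp le_rfl r3
  have n4 := UU_ne hp le_rfl r4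
  have hρ : UU p 1 ((R1 * R2) / (R3 * R4)) := UU_div hp le_rfl (UU_mul hp r1 r2) (UU_mul hp r3 r4)
  have hC : ((u0 * p ^ (2 * s + 1) + μ).choose (u * p ^ (2 * s + 1) + (μ - v)) : ℚ) =
      ((R1 * R2) / (R3 * R4)) * ((u0 * p ^ (2 * s + 1) + μ).choose (u * p ^ (2 * s + 1) + v) : ℚ) := by
    have f1 : ((u * p ^ (2 * s + 1)).factorial : ℚ) ≠ 0 := by exact_mod_cast Nat.factorial_ne_zero _
    have f2 : (((u0 - u) * p ^ (2 * s + 1)).factorial : ℚ) ≠ 0 := by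
      exact_mod_cast Nat.factorial_ne_zero _
    have f3 : (v.factorial : ℚ) ≠ 0 := by exact_mod_cast Nat.factorial_ne_zero _
    have f4 : ((μ - v).factorial : ℚ) ≠ 0 := by exact_mod_cast Nat.factorial_ne_zero _
    rw [← c1] at c2
    generalize ((u * p ^ (2 * s + 1)).factorial : ℚ) = F1 at *
    generalize (((u0 - u) * p ^ (2 * s + 1)).factorial : ℚ) = F2 at *
    generalize (v.factorial : ℚ) = F3 at *
    generalize ((μ - v).factorial : ℚ) = F4 at *
    have hF : F1 * F2 * F3 * F4 ≠ 0 := by positivity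
    rw [div_mul_eq_mul_div, eq_div_iff (mul_ne_zero n3 n4)]
    apply mul_left_cancel₀ hF
    linear_combination c2
  have key : gg (u0 * p ^ (2 * s + 1) + μ) (u * p ^ (2 * s + 1) + (μ - v)) =
    - (((R1 * R2) / (R3 * R4)) ^ 2 / (1 - (p : ℚ) ^ (1 + 2 * s) /
      ((4 * (u * p ^ (2 * s + 1) + v) + 1 : ℕ) : ℚ) * ((2 * (4 * u + 1) : ℕ) : ℚ))) *
      gg (u0 * p ^ (2 * s + 1) + μ) (u * p ^ (2 * s + 1) + v) := by
    have hκ0 := UU_ne hp le_rfl hκ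
    unfold gg
    rw [hC]
    have hq : ((4 * (u * p ^ (2 * s + 1) + v) + 1 : ℕ) : ℚ) ≠ 0 := by positivity
    have hq' : ((4 * (u * p ^ (2 * s + 1) + (μ - v)) + 1 : ℕ) : ℚ) ≠ 0 := by positivity
    have hqq : ((4 * (u * p ^ (2 * s + 1) + (μ - v)) + 1 : ℕ) : ℚ) =
      - (((4 * (u * p ^ (2 * s + 1) + v) + 1 : ℕ) : ℚ) * (1 - (p : ℚ) ^ (1 + 2 * s) /
      ((4 * (u * p ^ (2 * s + 1) + v) + 1 : ℕ) : ℚ) * ((2 * (4 * u + 1) : ℕ) : ℚ))) := by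
      rw [mul_sub, ← mul_assoc, mul_div_cancel₀ _ hq, add_comm 1 (2 * s), hMq]
      push_cast [hv]
      rw [hMq]; ring
    rw [hqq]
    generalize (R1 * R2) / (R3 * R4) = ρ
    generalize (1 - (p : ℚ) ^ (1 + 2 * s) /
      ((4 * (u * p ^ (2 * s + 1) + v) + 1 : ℕ) : ℚ) * ((2 * (4 * u + 1) : ℕ) : ℚ)) = κ at *
    generalize ((4 * (u * p ^ (2 * s + 1) + v) + 1 : ℕ) : ℚ) = q at *
    field_simp
  rw [key]
  have hU := UU_div hp le_rfl (UU_pow hp hρ) hκ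
  have := DD_mul0 hp (DD_neg hU) h0
  convert this using 1
  ring

lemma choose_ww (m t : ℕ) (ht : t ≤ m) :
    (m.choose t : ℚ) = (-1) ^ t * ww t * VV (2 * m + 1) t := by
  unfold ww VV
  induction t with
  | zero => simp
  | succ t ih =>
    have ih' := ih (by omega)
    have h1 : ((m.choose (t + 1) * (t + 1) : ℕ) : ℚ) = ((m.choose t * (m - t) : ℕ) : ℚ) := by
      rw [Nat.choose_succ_right_eq]
    have hle : t ≤ m := by omega
    push_cast [hle] at h1
    rw [prod_range_succ, prod_range_succ, pow_succ]
    have h2 : (t : ℚ) + 1 ≠ 0 := by positivity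
    have h3 : (m.choose (t + 1) : ℚ) = m.choose t * (m - t) / (t + 1) := by
      rw [eq_div_iff h2, h1]
    rw [h3, ih']
    generalize ∏ j ∈ range t, ((2 * (j : ℚ) + 1) / (2 * j + 2)) = a
    generalize ∏ j ∈ range t, (1 - ((2 * m + 1 : ℕ) : ℚ) / ((2 * j + 1 : ℕ) : ℚ)) = b
    have h4 : 2 * (t : ℚ) + 1 ≠ 0 := by positivity
    have h5 : 2 * (t : ℚ) + 2 ≠ 0 := by positivity
    push_cast
    field_simp
    ring

/-- the secondary factor of the terms -/
def ee (m t : ℕ) : ℚ := ZZ (2 * m + 1) (2 * (m - t)) / VV (2 * m + 1) t ^ 2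

section arith2

variable {p s m : ℕ}

lemma UU_ZZ (hp : p.Prime) (hN : 2 * m + 1 = p ^ (2 * s + 2)) {n : ℕ} (hn : n ≤ 2 * m) :
    UU p 1 (ZZ (2 * m + 1) n) := by
  refine UU_prod hp _ _ fun j hj => UU_one_sub ?_
  have hj' := mem_range.mp hj
  rw [mul_comm]
  exact DD_mul0 hp (DD_N1 hp hN (Nat.not_dvd_of_pos_of_lt (by omega) (by omega))) (DD_nat hp 2)

lemma UU_VV (hp : p.Prime) (hN : 2 * m + 1 = p ^ (2 * s + 2)) {n : ℕ} (hn : n ≤ m) :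
    UU p 1 (VV (2 * m + 1) n) := by
  refine UU_prod hp _ _ fun j hj => UU_one_sub ?_
  have hj' := mem_range.mp hj
  exact DD_N1 hp hN (Nat.not_dvd_of_pos_of_lt (by omega) (by omega))

lemma UU_ee (hp : p.Prime) (hN : 2 * m + 1 = p ^ (2 * s + 2)) {t : ℕ} (ht : t ≤ m) :
    UU p 1 (ee m t) :=
  UU_div hp le_rfl (UU_ZZ hp hN (by omega)) (UU_pow hp (UU_VV hp hN ht))

lemma ZZ_block (hp : p.Prime) (hN : 2 * m + 1 = p ^ (2 * s + 2)) (a b : ℕ)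
    (hb : b < p ^ (2 * s + 1)) :
    ∃ κ, UU p 2 κ ∧ ZZ (2 * m + 1) (a * p ^ (2 * s + 1) + b) =
      ZZ (2 * m + 1) (a * p ^ (2 * s + 1)) * κ := by
  refine ⟨_, ?_, prod_range_add _ _ _⟩
  refine UU_prod hp _ _ fun j hj => UU_one_sub ?_
  have hj' := mem_range.mp hj
  rw [mul_comm]
  refine DD_mul0 hp (DD_N2 hp hN ?_) (DD_nat hp 2)
  intro hd
  rw [add_assoc] at hd
  have := (Nat.dvd_add_right (Dvd.intro_left a rfl)).mp hd
  exact Nat.not_dvd_of_pos_of_lt (by omega) (by omega) this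

lemma VV_block (hp : p.Prime) (hN : 2 * m + 1 = p ^ (2 * s + 2)) (a b : ℕ)
    (hb : 2 * b < p ^ (2 * s + 1)) :
    ∃ κ, UU p 2 κ ∧ VV (2 * m + 1) (a * p ^ (2 * s + 1) + b) =
      VV (2 * m + 1) (a * p ^ (2 * s + 1)) * κ := by
  refine ⟨_, ?_, prod_range_add _ _ _⟩
  refine UU_prod hp _ _ fun j hj => UU_one_sub ?_
  have hj' := mem_range.mp hj
  refine DD_N2 hp hN ?_
  intro hd
  rw [show 2 * (a * p ^ (2 * s + 1) + j) + 1 = (2 * a) * p ^ (2 * s + 1) + (2 * j + 1) by ring] at hd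
  have := (Nat.dvd_add_right (Dvd.intro_left (2 * a) rfl)).mp hd
  exact Nat.not_dvd_of_pos_of_lt (by omega) (by omega) this

lemma ee_block (hp : p.Prime) (hN : 2 * m + 1 = p ^ (2 * s + 2)) {u0 μ u v : ℕ}
    (hM : 2 * μ + 1 = p ^ (2 * s + 1)) (hm : m = u0 * p ^ (2 * s + 1) + μ)
    (hu : u ≤ u0) (hv : v ≤ μ) :
    ∃ κ, UU p 2 κ ∧ ee m (u * p ^ (2 * s + 1) + v) =
      ZZ (2 * m + 1) (2 * (u0 - u) * p ^ (2 * s + 1)) /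
        VV (2 * m + 1) (u * p ^ (2 * s + 1)) ^ 2 * κ := by
  obtain ⟨a, ha, ea⟩ := ZZ_block hp hN (2 * (u0 - u)) (2 * (μ - v)) (by omega)
  obtain ⟨b, hb, eb⟩ := VV_block hp hN u v (by omega)
  refine ⟨a / b ^ 2, UU_div hp (by norm_num) ha (UU_pow hp hb), ?_⟩
  unfold ee
  have e : 2 * (m - (u * p ^ (2 * s + 1) + v)) =
      2 * (u0 - u) * p ^ (2 * s + 1) + 2 * (μ - v) := by
    have hle : u * p ^ (2 * s + 1) ≤ u0 * p ^ (2 * s + 1) := Nat.mul_le_mul_right _ hu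
    rw [mul_assoc 2, Nat.sub_mul]; omega
  rw [e, ea, eb, mul_pow, mul_div_mul_comm]

lemma ee_diff (hp : p.Prime) (hN : 2 * m + 1 = p ^ (2 * s + 2)) {u0 μ u v w : ℕ}
    (hM : 2 * μ + 1 = p ^ (2 * s + 1)) (hm : m = u0 * p ^ (2 * s + 1) + μ)
    (hu : u ≤ u0) (hv : v ≤ μ) (hw : w ≤ μ) :
    DD p 2 (ee m (u * p ^ (2 * s + 1) + v) - ee m (u * p ^ (2 * s + 1) + w)) := by
  obtain ⟨a, ha, ea⟩ := ee_block hp hN hM hm hu hv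
  obtain ⟨b, hb, eb⟩ := ee_block hp hN hM hm hu hw
  have hle : u * p ^ (2 * s + 1) ≤ u0 * p ^ (2 * s + 1) := Nat.mul_le_mul_right _ hu
  have hU := UU_div hp le_rfl
    (UU_ZZ hp hN (n := 2 * (u0 - u) * p ^ (2 * s + 1))
      (by rw [mul_assoc 2, Nat.sub_mul]; omega))
    (UU_pow hp (UU_VV hp hN (n := u * p ^ (2 * s + 1)) (by omega)))
  rw [ea, eb]
  have := DD_mul0 hp (DD_sub hp ha hb) (UU_int hp hU)
  convert this using 1
  ring

/-- the principal part with the central term removed -/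
def GG (m t : ℕ) : ℚ := if 4 * t + 1 = 2 * m + 1 then 0 else gg m t

lemma two_nd (hp : p.Prime) (h4 : p % 4 = 3) : ¬ ((p : ℤ) ∣ 2) := by
  intro h
  have : p ∣ 2 := by exact_mod_cast h
  have := Nat.le_of_dvd (by norm_num) this
  omega

lemma sum_GG (hp : p.Prime) (h4 : p % 4 = 3) (hN : 2 * m + 1 = p ^ (2 * s + 2)) :
    DD p 2 (∑ t ∈ range (m + 1), GG m t) := by
  refine DD_of_mul_int hp (two_nd hp h4) ?_
  have e : ((2 : ℤ) : ℚ) * ∑ t ∈ range (m + 1), GG m t =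
      ∑ t ∈ range (m + 1), (GG m t + GG m (m - t)) := by
    have h1 := sum_range_reflect (GG m) (m + 1)
    rw [Nat.add_sub_cancel] at h1
    rw [sum_add_distrib, h1]; push_cast; ring
  rw [e]
  refine DD_sum hp _ _ fun t ht => ?_
  have ht' : t ≤ m := by have := mem_range.mp ht; omega
  unfold GG
  by_cases hc : 4 * t + 1 = 2 * m + 1
  · rw [if_pos hc, if_pos (by omega)]
    simpa using DD_zero hp 2
  · rw [if_neg hc, if_neg (by omega)]
    exact pair_one hp h4 hN ht' hc

lemma DD_GG0 (hp : p.Prime) (h4 : p % 4 = 3) (hN : 2 * m + 1 = p ^ (2 * s + 2))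
    {t : ℕ} (ht : t ≤ m) : DD p 0 (GG m t) := by
  unfold GG
  split_ifs
  · exact DD_zero hp 0
  · exact DD_gg0 hp h4 hN ht

/-- reflection inside blocks of length `M` -/
def refl_block (M μ t : ℕ) : ℕ := if t % M ≤ μ then t / M * M + (μ - t % M) else t

lemma refl_invol {M μ : ℕ} (hM : μ < M) (t : ℕ) : refl_block M μ (refl_block M μ t) = t := by
  unfold refl_block
  by_cases h : t % M ≤ μ
  · rw [if_pos h]
    have h1 : (t / M * M + (μ - t % M)) % M = μ - t % M := by
      rw [Nat.mul_add_mod', Nat.mod_eq_of_lt (by omega)]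
    have h2 : (t / M * M + (μ - t % M)) / M = t / M := by
      rw [mul_comm, Nat.mul_add_div (by omega), Nat.div_eq_of_lt (show μ - t % M < M by omega), add_zero]
    rw [h1, h2, if_pos (by omega)]
    have := Nat.div_add_mod' t M
    omega
  · rw [if_neg h, if_neg h]

lemma block_bound {M μ u0 t : ℕ} (hM : μ < M) (ht : t ≤ u0 * M + μ) :
    t / M ≤ u0 := by
  rw [← Nat.lt_succ_iff, Nat.div_lt_iff_lt_mul (by omega), Nat.succ_mul]
  omega

lemma refl_mem {M μ u0 t : ℕ} (hM : μ < M) (ht : t ≤ u0 * M + μ) :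
    refl_block M μ t ≤ u0 * M + μ := by
  unfold refl_block
  split_ifs
  · have : t / M * M ≤ u0 * M := Nat.mul_le_mul_right M (block_bound hM ht)
    omega
  · exact ht

lemma sum_GGe (hp : p.Prime) (h4 : p % 4 = 3) (hN : 2 * m + 1 = p ^ (2 * s + 2)) {u0 μ : ℕ}
    (hM : 2 * μ + 1 = p ^ (2 * s + 1)) (hm : m = u0 * p ^ (2 * s + 1) + μ) :
    DD p 2 (∑ t ∈ range (m + 1), GG m t * (ee m t - 1)) := by
  refine DD_of_mul_int hp (two_nd hp h4) ?_
  have hμ : μ < p ^ (2 * s + 1) := by omega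
  have e : ((2 : ℤ) : ℚ) * ∑ t ∈ range (m + 1), GG m t * (ee m t - 1) =
      ∑ t ∈ range (m + 1), (GG m t * (ee m t - 1) +
        GG m (refl_block (p ^ (2 * s + 1)) μ t) *
          (ee m (refl_block (p ^ (2 * s + 1)) μ t) - 1)) := by
    have h1 : ∑ t ∈ range (m + 1), GG m (refl_block (p ^ (2 * s + 1)) μ t) *
          (ee m (refl_block (p ^ (2 * s + 1)) μ t) - 1) =
          ∑ t ∈ range (m + 1), GG m t * (ee m t - 1) := by
      refine sum_nbij' (refl_block (p ^ (2 * s + 1)) μ) (refl_block (p ^ (2 * s + 1)) μ)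
        ?_ ?_ ?_ ?_ ?_
      · intro t ht
        have := mem_range.mp ht
        have := refl_mem (u0 := u0) hμ (t := t) (by omega)
        exact mem_range.mpr (by omega)
      · intro t ht
        have := mem_range.mp ht
        have := refl_mem (u0 := u0) hμ (t := t) (by omega)
        exact mem_range.mpr (by omega)
      · intro t _; exact refl_invol hμ t
      · intro t _; exact refl_invol hμ t
      · intro t _; rfl
    rw [sum_add_distrib, h1]; push_cast; ring
  rw [e]
  refine DD_sum hp _ _ fun t ht => ?_
  have ht' : t ≤ m := by have := mem_range.mp ht; omega
  by_cases hv : t % p ^ (2 * s + 1) ≤ μ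
  · have hu : t / p ^ (2 * s + 1) ≤ u0 := block_bound hμ (by omega)
    have hσ := refl_mem (u0 := u0) hμ (t := t) (by omega)
    have et := Nat.div_add_mod' t (p ^ (2 * s + 1))
    unfold refl_block at hσ ⊢
    rw [if_pos hv] at hσ ⊢
    generalize t / p ^ (2 * s + 1) = u at *
    generalize t % p ^ (2 * s + 1) = v at *
    subst et
    have hM4 := (pow_mod4 h4 s).2
    have nc : ∀ w ≤ μ, 4 * (u * p ^ (2 * s + 1) + w) + 1 ≠ 2 * m + 1 := by
      intro w hw hc
      have hd : p ^ (2 * s + 1) ∣ 4 * (u * p ^ (2 * s + 1) + w) + 1 := by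
        rw [hc, hN]; exact pow_dvd_pow p (by omega)
      have := res_three hM4 hd
      rw [Nat.mul_add_mod', Nat.mod_eq_of_lt (by omega)] at this
      omega
    unfold GG
    rw [if_neg (nc _ hv), if_neg (nc _ (by omega))]
    have h0 := DD_gg0 hp h4 hN ht'
    have h0' := DD_gg0 hp h4 hN (t := u * p ^ (2 * s + 1) + (μ - v)) (by omega)
    have h1 : DD p 1 (gg m (u * p ^ (2 * s + 1) + v) + gg m (u * p ^ (2 * s + 1) + (μ - v))) := by
      have := pair_two hp h4 hM hu hv (by rw [← hm]; exact h0)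
      rwa [← hm] at this
    have h2 := ee_diff hp hN hM hm hu (v := μ - v) (w := v) (by omega) hv
    have h3 : DD p 1 (ee m (u * p ^ (2 * s + 1) + v) - 1) := UU_ee hp hN ht'
    have := DD_add hp (DD_mul hp h1 h3) (DD_mul0 hp h2 h0')
    convert this using 1
    ring
  · have hσ : refl_block (p ^ (2 * s + 1)) μ t = t := by
      unfold refl_block; rw [if_neg hv]
    rw [hσ]
    have h3 : DD p 1 (ee m t - 1) := UU_ee hp hN ht'
    have h1 : DD p 1 (GG m t) := by
      unfold GG
      split_ifs with hc
      · exact DD_zero hp 1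
      · refine DD_gg1 hp h4 hN ht' hc ?_
        have hs : (t % p ^ (2 * s + 1) + (m - t) % p ^ (2 * s + 1)) % p ^ (2 * s + 1) = μ := by
          rw [← Nat.add_mod, show t + (m - t) = m by omega, hm, Nat.mul_add_mod',
            Nat.mod_eq_of_lt hμ]
        by_contra hlt
        rw [Nat.mod_eq_of_lt (by omega)] at hs
        exact hv (hs ▸ Nat.le_add_right _ _)
    have := DD_mul hp h1 h3
    exact DD_add hp this this

lemma sum_all (hp : p.Prime) (h4 : p % 4 = 3) (hN : 2 * m + 1 = p ^ (2 * s + 2)) :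
    DD p 2 (∑ t ∈ range (m + 1), GG m t * ee m t) := by
  have hM4 := (pow_mod4 h4 s).2
  obtain ⟨μ, hM⟩ : ∃ μ, 2 * μ + 1 = p ^ (2 * s + 1) := ⟨p ^ (2 * s + 1) / 2, by omega⟩
  obtain ⟨u0, hu0⟩ : ∃ u0, p = 2 * u0 + 1 := ⟨p / 2, by omega⟩
  have hm : m = u0 * p ^ (2 * s + 1) + μ := by
    have : p ^ (2 * s + 2) = p * p ^ (2 * s + 1) := by ring
    have h2 : p * p ^ (2 * s + 1) = 2 * (u0 * p ^ (2 * s + 1)) + p ^ (2 * s + 1) := by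
      nth_rewrite 1 [hu0]; ring
    omega
  have := DD_add hp (sum_GG hp h4 hN) (sum_GGe hp h4 hN hM hm)
  rw [← sum_add_distrib] at this
  convert this using 1
  exact sum_congr rfl fun t _ => by ring

lemma term_eq (hp : p.Prime) (hN : 2 * m + 1 = p ^ (2 * s + 2)) {t : ℕ} (ht : t ≤ m) :
    ww t ^ 2 * BB (2 * m + 1) (2 * t) = KK (2 * m + 1) * (gg m t * ee m t) := by
  rw [BB_even m t ht]
  have hV := UU_ne hp le_rfl (UU_VV hp hN ht)
  unfold gg ee
  rw [choose_ww m t ht, mul_pow, mul_pow, ← pow_mul, mul_comm t 2, pow_mul]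
  have : ((4 * t + 1 : ℕ) : ℚ) ≠ 0 := by positivity
  field_simp
  simp

lemma DD_KK (hp : p.Prime) (h4 : p % 4 = 3) (hN : 2 * m + 1 = p ^ (2 * s + 2)) :
    DD p (2 * s + 2) (KK (2 * m + 1)) := by
  have h := KK_eq (2 * m + 1) (by omega)
  refine ⟨8 * ((2 * (2 * m + 1)).choose (2 * m + 1) : ℕ), 16 ^ (2 * m + 1), ?_, ?_⟩
  · have h16 : (16 : ℤ) = 2 ^ 4 := by norm_num
    rw [h16, ← pow_mul]
    intro hd
    exact two_nd hp h4 ((Nat.prime_iff_prime_int.mp hp).dvd_of_dvd_pow hd)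
  · have hq : ((2 * m + 1 : ℕ) : ℚ) = (p : ℚ) ^ (2 * s + 2) := by rw [hN]; push_cast; rfl
    rw [hq] at h
    push_cast
    rw [h]; ring

lemma UU_BB (hp : p.Prime) (hN : 2 * m + 1 = p ^ (2 * s + 2)) : UU p 2 (BB (2 * m + 1) m) := by
  refine UU_prod hp _ _ fun j hj => ?_
  have h1 := mem_erase.mp hj
  have h2 := mem_range.mp h1.2
  have hd := DD_N1 hp hN (j := 2 * j + 1) (not_dvd_N (by omega) (by omega) (by omega))
  have hU := UU_inv hp (by norm_num) (UU_one_sub (DD_mul hp hd hd))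
  convert hU using 1
  have h3 := vv_ne h1.1
  have e1 : vv j - vv m = vv j * (1 - ((2 * m + 1 : ℕ) : ℚ) / ((2 * j + 1 : ℕ) : ℚ) *
      (((2 * m + 1 : ℕ) : ℚ) / ((2 * j + 1 : ℕ) : ℚ))) := by
    unfold vv
    push_cast
    have : 2 * (j : ℚ) + 1 ≠ 0 := by positivity
    field_simp
  have h4 : vv j ≠ 0 := by unfold vv; positivity
  rw [e1, div_mul_eq_div_div, div_self h4, one_div]

end arith2

lemma rf_three (h : ℕ) : risingFactorial (3/4) (2 * h) =
    ∏ i ∈ range h, (((4 * h + 1 : ℚ) - 2 * (2 * i + 1)) * ((4 * h + 1) + 2 * (2 * i + 1)) / 16) := by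
  unfold risingFactorial
  rw [two_mul, prod_range_add, ← prod_range_reflect, ← prod_mul_distrib]
  refine prod_congr rfl fun i hi => ?_
  have hi' := mem_range.mp hi
  have : ((h - 1 - i : ℕ) : ℚ) = h - 1 - i := by
    rw [Nat.sub_sub, Nat.cast_sub (by omega)]; push_cast; ring
  rw [this]; push_cast; ring

lemma rf_five (h : ℕ) : risingFactorial (5/4) (2 * h) =
    (4 * h + 1) * ∏ i ∈ range h, (((4 * h + 1 : ℚ) - 4 * (i + 1)) * ((4 * h + 1) + 4 * (i + 1)) / 16) := by
  have h1 : risingFactorial (5/4) (2 * h) * (1/4) = risingFactorial (1/4) (2 * h + 1) := by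
    unfold risingFactorial
    rw [prod_range_succ']
    push_cast
    congr 1
    · exact prod_congr rfl fun i _ => by ring
    · ring
  have h2 : risingFactorial (1/4) (2 * h + 1) = ((4 * h + 1) / 4) *
      ∏ i ∈ range h, (((4 * h + 1 : ℚ) - 4 * (i + 1)) * ((4 * h + 1) + 4 * (i + 1)) / 16) := by
    unfold risingFactorial
    rw [show 2 * h + 1 = h + (h + 1) by ring, prod_range_add, prod_range_succ', ← prod_range_reflect,
      ← mul_assoc, ← prod_mul_distrib, mul_comm]
    congr 1
    · push_cast; ring
    · refine prod_congr rfl fun i hi => ?_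
      have hi' := mem_range.mp hi
      have : ((h - 1 - i : ℕ) : ℚ) = h - 1 - i := by
        rw [Nat.sub_sub, Nat.cast_sub (by omega)]; push_cast; ring
      rw [this]; push_cast; ring
  rw [h2] at h1
  linear_combination 4 * h1

lemma rhs_eq {p s h : ℕ} (hp : p.Prime) (hN : 2 * (2 * h) + 1 = p ^ (2 * s + 2)) :
    ∃ Q, UU p 2 Q ∧ ((2 * (2 * h) + 1 : ℕ) : ℚ) * risingFactorial (3/4) (2 * h) /
      risingFactorial (5/4) (2 * h) = ww h ^ 2 * Q := by
  have d1 : ∀ i ∈ range h, UU p 2 (1 - ((2 * (2 * h) + 1 : ℕ) : ℚ) / ((2 * (2 * i + 1) : ℕ) : ℚ) *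
      (((2 * (2 * h) + 1 : ℕ) : ℚ) / ((2 * (2 * i + 1) : ℕ) : ℚ))) := by
    intro i hi
    have := mem_range.mp hi
    have hd := DD_N1 hp hN (j := 2 * (2 * i + 1)) (Nat.not_dvd_of_pos_of_lt (by omega) (by omega))
    exact UU_one_sub (DD_mul hp hd hd)
  have d2 : ∀ i ∈ range h, UU p 2 (1 - ((2 * (2 * h) + 1 : ℕ) : ℚ) / ((4 * (i + 1) : ℕ) : ℚ) *
      (((2 * (2 * h) + 1 : ℕ) : ℚ) / ((4 * (i + 1) : ℕ) : ℚ))) := by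
    intro i hi
    have := mem_range.mp hi
    have hd := DD_N1 hp hN (j := 4 * (i + 1)) (Nat.not_dvd_of_pos_of_lt (by omega) (by omega))
    exact UU_one_sub (DD_mul hp hd hd)
  refine ⟨_, UU_prod hp (range h) _ fun i hi => UU_div hp (by norm_num) (d1 i hi) (d2 i hi), ?_⟩
  rw [rf_three, rf_five]
  unfold ww
  have hq : ((2 * (2 * h) + 1 : ℕ) : ℚ) = 4 * h + 1 := by push_cast; ring
  have h0 : (4 * (h : ℚ) + 1) ≠ 0 := by positivity
  rw [hq, mul_div_mul_left _ _ h0, ← prod_div_distrib, ← prod_pow, ← prod_mul_distrib]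
  refine prod_congr rfl fun i hi => ?_
  have e2 := UU_ne hp (by norm_num) (d2 i hi)
  rw [hq] at e2
  have h1 : 2 * (i : ℚ) + 1 ≠ 0 := by positivity
  have h2 : (i : ℚ) + 1 ≠ 0 := by positivity
  generalize (4 * (h : ℚ) + 1) = n at *
  push_cast at e2 ⊢
  have e3 : 1 - n / (4 * ((i : ℚ) + 1)) * (n / (4 * ((i : ℚ) + 1))) =
    (4 * (i + 1) - n) * (4 * (i + 1) + n) / (16 * (i + 1) ^ 2) := by
    field_simp; ring
  rw [e3] at e2 ⊢
  have e4 : (4 * ((i : ℚ) + 1) - n) * (4 * (i + 1) + n) ≠ 0 := by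
    intro hz; rw [hz] at e2; simp at e2
  have e5 : 4 * ((i : ℚ) + 1) - n ≠ 0 := left_ne_zero_of_mul e4
  have e6 : 4 * ((i : ℚ) + 1) + n ≠ 0 := right_ne_zero_of_mul e4
  have e7 : (n - 4 * ((i : ℚ) + 1)) * (n + 4 * (i + 1)) / 16 =
    - ((4 * ((i : ℚ) + 1) - n) * (4 * (i + 1) + n) / 16) := by ring
  rw [e7, show 2 * (i : ℚ) + 2 = 2 * (i + 1) by ring]
  field_simp
  ring

/-- For a prime `p ≡ 3 (mod 4)` and `r ≥ 1`,
`∑_{k=0}^{p^{2r}-1} (1/2)_k^3/k!^3 ≡ p^{2r} (3/4)_{(p^{2r}-1)/2}/(5/4)_{(p^{2r}-1)/2}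
(mod p^{2r+2})`. -/
theorem stmt15 (p r : ℕ) (hp : p.Prime) (h : p % 4 = 3) (hr : 1 ≤ r) :
    ∃ a b : ℤ, ¬ ((p : ℤ) ∣ b) ∧
      ((∑ k ∈ Finset.range (p ^ (2 * r)),
          risingFactorial (1/2) k ^ 3 / (k.factorial : ℚ) ^ 3)
        - (p : ℚ) ^ (2 * r) * risingFactorial (3/4) ((p ^ (2 * r) - 1) / 2)
            / risingFactorial (5/4) ((p ^ (2 * r) - 1) / 2)) * (b : ℚ)
      = (p : ℚ) ^ (2 * r + 2) * (a : ℚ) := by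
  obtain ⟨s, rfl⟩ : ∃ s, r = s + 1 := ⟨r - 1, by omega⟩
  have hmod := (pow_mod4 h (s + 1)).1
  rw [show 2 * (s + 1) = 2 * s + 2 by ring] at *
  obtain ⟨c, hc⟩ : ∃ c, 2 * (2 * c) + 1 = p ^ (2 * s + 2) := ⟨p ^ (2 * s + 2) / 4, by omega⟩
  change DD p (2 * s + 2 + 2) _
  have hpq : (p : ℚ) ^ (2 * s + 2) = ((2 * (2 * c) + 1 : ℕ) : ℚ) := by rw [hc]; push_cast; rfl
  rw [hpq, ← hc, show (2 * (2 * c) + 1 - 1) / 2 = 2 * c by omega]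
  obtain ⟨Q, hQ, hrhs⟩ := rhs_eq hp hc
  rw [hrhs, main_sum]
  have hsum : ∑ t ∈ range (2 * c + 1), ww t ^ 2 * BB (2 * (2 * c) + 1) (2 * t) =
      ww c ^ 2 * BB (2 * (2 * c) + 1) (2 * c) +
        KK (2 * (2 * c) + 1) * ∑ t ∈ range (2 * c + 1), GG (2 * c) t * ee (2 * c) t := by
    have h1 : ∀ t ∈ range (2 * c + 1), ww t ^ 2 * BB (2 * (2 * c) + 1) (2 * t) =
        (if t = c then ww c ^ 2 * BB (2 * (2 * c) + 1) (2 * c) else 0) +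
          KK (2 * (2 * c) + 1) * (GG (2 * c) t * ee (2 * c) t) := by
      intro t ht
      have ht' := mem_range.mp ht
      unfold GG
      by_cases htc : t = c
      · subst htc
        rw [if_pos rfl, if_pos (by omega)]; ring
      · rw [if_neg htc, if_neg (by omega), term_eq hp hc (by omega)]; ring
    rw [sum_congr rfl h1, sum_add_distrib, sum_ite_eq' , if_pos (mem_range.mpr (by omega)), mul_sum]
  rw [hsum]
  have hw : DD p (2 * s + 2) (ww c ^ 2) := by
    have hch : p ^ (s + 1) ∣ (2 * c).choose c := by
      have := choose_dvd hp h hc (t := c) (i := 2 * s + 2) (by omega) le_rfl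
        (by rw [← hc]; exact ⟨1, by ring⟩)
      rwa [show (2 * s + 2 + 1) / 2 = s + 1 by omega] at this
    obtain ⟨w, hw⟩ := hch
    have hV := UU_VV hp hc (n := c) (by omega)
    have hV0 := UU_ne hp le_rfl hV
    have hA : DD p (2 * s + 2) (((2 * c).choose c : ℚ) ^ 2) :=
      ⟨w ^ 2, 1, nd_one hp, by rw [hw]; push_cast; ring⟩
    have := DD_mul0 hp hA (UU_int hp (UU_inv hp le_rfl (UU_pow hp hV)))
    convert this using 1
    rw [choose_ww _ _ (by omega), mul_pow, mul_pow, ← pow_mul, mul_comm c 2, pow_mul]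
    field_simp
    simp
  have hB := UU_BB hp hc
  have t1 := DD_mul hp hw (DD_sub hp hB hQ)
  have t2 := DD_mul hp (DD_KK hp h hc) (sum_all hp h hc)
  have := DD_add hp t1 t2
  convert this using 1
  ring
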